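/- arXiv:2206.11391 — 3 statements merged into one kernel-verified Lean document; each statement's English description precedes it below -/
import Mathlib

section
/- Let (A, 𝔪) be a commutative Noetherian local ring with residue field k = A/𝔪, and let n be a natural number such that A is Gorenstein of dimension n, i.e. Ext_A^i(k, A) = 0 for all i ≠ n and Ext_A^n(k, A) is isomorphic to k as an A-module. Then for every A-module M of finite length, the A-module Ext_A^n(M, A) also has finite length, and its length equals the length of M. -/
/-!
The module `Ext^i(-, A)` vanishes on `k` outside degree `n` and has length one in degree `n`.
Induct on the length of `M`: a nonzero `M` has a submodule `N` of finite length with `M ⧸ N` simple,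
hence isomorphic to `k` because `A` is local. In the long exact sequence of
`0 → N → M → M ⧸ N → 0` only degree `n` survives, so `Ext^i(M, A) = 0` for `i ≠ n`, and
`0 → Ext^n(M ⧸ N, A) → Ext^n(M, A) → Ext^n(N, A) → 0` is exact (`ext_concentrated_of_shortExact`).
Additivity of length then gives the claim.

The long exact sequence is available for `CategoryTheory.Abelian.Ext`, defined by morphisms in the
derived category, whereas `extA` is a derived functor of the linear Yoneda functor. The lemma
`nonempty_extLinearEquiv` identifies the two linearly: for a projective resolution `P` of `X`, both
are cocycles modulo coboundaries in `Hom(P, Y)`.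
-/

open CategoryTheory

/-- `extA A i M N` is the `A`-module `Ext_A^i(M, N)`, computed in the abelian category of
`A`-modules via the derived functor `Ext` bifunctor. -/
noncomputable abbrev extA (A : Type) [CommRing A] (i : ℕ) (M N : Type)
    [AddCommGroup M] [Module A M] [AddCommGroup N] [Module A N] : ModuleCat A :=
  ((Ext A (ModuleCat A) i).obj (Opposite.op (ModuleCat.of A M))).obj (ModuleCat.of A N)

section ExtComparison

variable {A : Type} [CommRing A] {X : ModuleCat.{0} A} (P : ProjectiveResolution X)
  (Y : ModuleCat.{0} A)

/-- The class of a cocycle vanishes exactly when it is a coboundary, uniformly in `n`. For `n = 0`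
there are no nonzero coboundaries; there `prev 0` is the junk value `0`, and `d 0 0 = 0` makes the
right-hand side say `f = 0`. -/
lemma extMk_eq_zero_iff_prev {n : ℕ} (f : P.complex.X n ⟶ Y)
    (hf : P.complex.d (n + 1) n ≫ f = 0) :
    P.extMk f (n + 1) rfl hf = 0 ↔
      ∃ g : P.complex.X ((ComplexShape.up ℕ).prev n) ⟶ Y,
        P.complex.d n ((ComplexShape.up ℕ).prev n) ≫ g = f := by
  cases n with
  | succ p =>
    rw [show (ComplexShape.up ℕ).prev (p + 1) = p from
      (ComplexShape.up ℕ).prev_eq' (by simp)]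
    exact P.extMk_eq_zero_iff f _ rfl hf p rfl
  | zero =>
    have h0 : P.complex.d 0 ((ComplexShape.up ℕ).prev 0) = 0 := by
      apply P.complex.shape
      simp
    simp only [h0, Limits.zero_comp]
    rw [← P.extEquivCohomologyClass.apply_eq_iff_eq,
      P.extEquivCohomologyClass_extMk, P.extEquivCohomologyClass_zero,
      CochainComplex.HomComplex.CohomologyClass.mk_eq_zero_iff]
    rw [CochainComplex.HomComplex.Cocycle.toSingleMk_mem_coboundaries_iff _ _ _ _ _ 1 (by simp)]
    have hz : Limits.IsZero (P.cochainComplex.X 1) :=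
      P.cochainComplex.isZero_of_isStrictlyLE 0 1 (by simp)
    constructor
    · rintro ⟨g, hg⟩
      rw [hz.eq_of_src g 0, Limits.comp_zero] at hg
      refine ⟨0, ?_⟩
      rw [← cancel_epi (P.cochainComplexXIso (-(0 : ℕ)) 0 rfl).hom, ← hg]
      simp
    · rintro ⟨g, rfl⟩
      exact ⟨0, by simp⟩

lemma extMk_smul {n : ℕ} (r : A) (f : P.complex.X n ⟶ Y)
    (hf : P.complex.d (n + 1) n ≫ f = 0) :
    P.extMk (r • f) (n + 1) rfl (by rw [Linear.comp_smul, hf, smul_zero]) =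
      r • P.extMk f (n + 1) rfl hf := by
  simp only [Abelian.Ext.smul_eq_comp_mk₀, P.extMk_comp_mk₀, Linear.comp_smul, Category.comp_id]

/-- Sending a degree-`n` cocycle of `Hom(P, Y)` to its class in `Ext`, as a linear map. -/
noncomputable def cocycleToExt (n : ℕ) :
    LinearMap.ker ((P.complex.linearYonedaObj A Y).sc' ((ComplexShape.up ℕ).prev n) n
      (n + 1)).g.hom →ₗ[A] Abelian.Ext X Y n where
  toFun f := P.extMk (show P.complex.X n ⟶ Y from f.1) (n + 1) rfl f.2
  map_add' _ _ := (P.add_extMk _ _ _ _ _ _).symm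
  map_smul' r f := extMk_smul P Y r (show P.complex.X n ⟶ Y from f.1) f.2

/-- The `Ext`-module obtained by deriving the linear Yoneda functor agrees, `A`-linearly, with the
one defined by morphisms in the derived category. -/
lemma nonempty_extLinearEquiv (X Y : ModuleCat.{0} A) (n : ℕ) :
    Nonempty (((_root_.Ext A (ModuleCat A) n).obj (Opposite.op X)).obj Y ≃ₗ[A]
      Abelian.Ext X Y n) := by
  let P := projectiveResolution X
  let K := P.complex.linearYonedaObj A Y
  let S := K.sc' ((ComplexShape.up ℕ).prev n) n (n + 1)
  have hsurj : Function.Surjective (cocycleToExt P Y n) := fun α ↦ by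
    obtain ⟨f, hf, h⟩ := P.extMk_surjective α (n + 1) rfl
    exact ⟨⟨f, hf⟩, h⟩
  have hker : LinearMap.range S.moduleCatToCycles = LinearMap.ker (cocycleToExt P Y n) := by
    ext f
    rw [LinearMap.mem_ker, LinearMap.mem_range]
    refine Iff.trans ?_ (extMk_eq_zero_iff_prev P Y f.1 f.2).symm
    exact exists_congr fun g ↦ Subtype.ext_iff
  exact ⟨((P.isoExt n Y ≪≫
      K.homologyIsoSc' ((ComplexShape.up ℕ).prev n) n (n + 1) rfl (by simp) ≪≫
      S.moduleCatHomologyIso).toLinearEquiv).trans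
    ((Submodule.quotEquivOfEq _ _ hker).trans
      ((cocycleToExt P Y n).quotKerEquivOfSurjective hsurj))⟩

end ExtComparison

/-- Additivity of length for `Ext^n(-, Y)` on a short exact sequence, together with vanishing in
the other degrees, when the outer terms only have `Ext` in degree `n`. -/
lemma ext_concentrated_of_shortExact {A : Type} [CommRing A] {S : ShortComplex (ModuleCat.{0} A)}
    (hS : S.ShortExact) (Y : ModuleCat.{0} A) (n : ℕ)
    (h₁ : ∀ i ≠ n, Subsingleton (Abelian.Ext S.X₁ Y i))
    (h₃ : ∀ i ≠ n, Subsingleton (Abelian.Ext S.X₃ Y i)) :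
    (∀ i ≠ n, Subsingleton (Abelian.Ext S.X₂ Y i)) ∧
      Module.length A (Abelian.Ext S.X₂ Y n) =
        Module.length A (Abelian.Ext S.X₃ Y n) + Module.length A (Abelian.Ext S.X₁ Y n) := by
  constructor
  · intro i hi
    have := h₁ i hi
    have := h₃ i hi
    refine subsingleton_of_forall_eq 0 fun x ↦ ?_
    obtain ⟨y, rfl⟩ := Abelian.Ext.contravariant_sequence_exact₂ hS Y x (Subsingleton.elim _ _)
    rw [Subsingleton.elim y 0, Abelian.Ext.comp_zero]
  · refine Module.length_eq_add_of_exact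
      ((Abelian.Ext.mk₀ S.g).precompOfLinear A Y (zero_add n))
      ((Abelian.Ext.mk₀ S.f).precompOfLinear A Y (zero_add n)) ?_ ?_ ?_
    · rw [← LinearMap.ker_eq_bot, LinearMap.ker_eq_bot']
      intro x hx
      cases n with
      | zero =>
        have := hS.epi_g
        exact Abelian.Ext.precomp_mk₀_injective_of_epi Y S.g (hx.trans (map_zero _).symm)
      | succ m =>
        obtain ⟨y, rfl⟩ := Abelian.Ext.contravariant_sequence_exact₃ hS Y x hx (add_comm 1 m)
        have := h₁ m (by simp)
        rw [Subsingleton.elim y 0, Abelian.Ext.comp_zero]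
    · intro x
      have := h₃ (n + 1) (by simp)
      exact Abelian.Ext.contravariant_sequence_exact₁ hS Y x (add_comm 1 n) (Subsingleton.elim _ _)
    · refine fun x ↦ ⟨Abelian.Ext.contravariant_sequence_exact₂ hS Y x, ?_⟩
      rintro ⟨y, rfl⟩
      simp

/-- If `(A, 𝔪)` is a commutative Noetherian local ring with residue field `k` which is
Gorenstein of dimension `n`, then for every finite-length `A`-module `M`, the `A`-module
`Ext_A^n(M, A)` also has finite length, and its length (the Krull dimension of its lattice
of submodules, i.e. the common length of its composition series) equals the length of `M`. -/
theorem gorenstein_ext_length_eq_of_finite_length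
    (A : Type) [CommRing A] [IsNoetherianRing A] [IsLocalRing A] (n : ℕ)
    (hvanish : ∀ i : ℕ, i ≠ n → Subsingleton (extA A i (IsLocalRing.ResidueField A) A))
    (hiso : Nonempty
      (extA A n (IsLocalRing.ResidueField A) A ≃ₗ[A] IsLocalRing.ResidueField A))
    (M : Type) [AddCommGroup M] [Module A M] (hM : IsFiniteLength A M) :
    IsFiniteLength A (extA A n M A) ∧
      Order.krullDim (Submodule A (extA A n M A)) = Order.krullDim (Submodule A M) := by
  have key : (∀ i ≠ n, Subsingleton (Abelian.Ext (ModuleCat.of A M) (ModuleCat.of A A) i)) ∧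
      Module.length A (Abelian.Ext (ModuleCat.of A M) (ModuleCat.of A A) n) =
        Module.length A M := by
    -- Vanishing in all degrees other than `n` is what makes the induction go through.
    induction hM with
    | @of_subsingleton M _ _ _ =>
      have (i : ℕ) : Subsingleton (Abelian.Ext (ModuleCat.of A M) (ModuleCat.of A A) i) :=
        subsingleton_of_forall_eq 0 fun x ↦ by
          rw [← x.mk₀_id_comp, (ModuleCat.isZero_of_subsingleton (ModuleCat.of A M)).eq_of_src
            (𝟙 _) 0, Abelian.Ext.mk₀_zero, Abelian.Ext.zero_comp]
      exact ⟨fun i _ ↦ this i, by simp [Module.length_eq_zero]⟩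
    | @of_simple_quotient M _ _ N hs _ ih =>
      obtain ⟨I, hI, ⟨e⟩⟩ := isSimpleModule_iff_quot_maximal.mp hs
      obtain rfl := IsLocalRing.eq_maximalIdeal hI
      have hE (i : ℕ) : Nonempty
          (extA A i (IsLocalRing.ResidueField A) A ≃ₗ[A]
            Abelian.Ext (ModuleCat.of A (M ⧸ N)) (ModuleCat.of A A) i) := by
        have c : Nonempty (extA A i (IsLocalRing.ResidueField A) A ≃ₗ[A]
            extA A i (M ⧸ N) A) :=
          ⟨((((_root_.Ext A (ModuleCat A) i).mapIso
            (LinearEquiv.toModuleIso e).op).app (ModuleCat.of A A))).toLinearEquiv⟩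
        exact ⟨c.some.trans (nonempty_extLinearEquiv _ _ i).some⟩
      let S : ShortComplex (ModuleCat.{0} A) :=
        ShortComplex.mk (ModuleCat.ofHom N.subtype) (ModuleCat.ofHom N.mkQ)
          (by ext; simp)
      have hS : S.ShortExact :=
        { exact := (ShortComplex.ShortExact.moduleCat_exact_iff_function_exact _).mpr
            (LinearMap.exact_subtype_mkQ N)
          mono_f := (ModuleCat.mono_iff_injective _).mpr N.injective_subtype
          epi_g := (ModuleCat.epi_iff_surjective _).mpr N.mkQ_surjective }
      have h₃ : ∀ i ≠ n, Subsingleton (Abelian.Ext S.X₃ (ModuleCat.of A A) i) := fun i hi ↦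
        have := hvanish i hi
        (hE i).some.symm.toEquiv.subsingleton
      obtain ⟨hv, hl⟩ := ext_concentrated_of_shortExact hS (ModuleCat.of A A) n ih.1 h₃
      have h₃' : Module.length A (Abelian.Ext S.X₃ (ModuleCat.of A A) n) =
          Module.length A (M ⧸ N) :=
        ((hE n).some.symm.trans (hiso.some.trans e.symm)).length_eq
      exact ⟨hv, by
        rw [Module.length_eq_add_of_exact N.subtype N.mkQ N.injective_subtype N.mkQ_surjective
          (LinearMap.exact_subtype_mkQ N), add_comm, ← ih.2, ← h₃']
        exact hl⟩
  obtain ⟨e⟩ := nonempty_extLinearEquiv (ModuleCat.of A M) (ModuleCat.of A A) n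
  have hlen : Module.length A (extA A n M A) = Module.length A M := e.length_eq.trans key.2
  exact ⟨Module.length_ne_top_iff.mp (hlen ▸ Module.length_ne_top_iff.mpr hM),
    by rw [← Module.coe_length, ← Module.coe_length, hlen]⟩
end

section
/- Let (A, 𝔪) be a commutative Noetherian local ring with residue field k = A/𝔪, and let n be a natural number such that A is Gorenstein of dimension n, i.e. Ext_A^i(k, A) = 0 for all i ≠ n and Ext_A^n(k, A) is isomorphic to k as an A-module. Then for every A-module M of finite length, the double dual Ext_A^n(Ext_A^n(M, A), A) is isomorphic to M as an A-module. -/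
/-!
Write `D(M) = Ext_A^n(M, A)`. From the hypotheses on `k` and the long exact sequence, dévissage shows
that on modules of finite length `Ext_A^i(-, A)` vanishes for `i ≠ n`, so that `D` is exact there, and
that `D` preserves length (`Dualizes.of_isFiniteLength`).

Let `I = ann M`, so that `A/I` has finite length, and put `E = D(A/I)`. For a finite length module `N`
killed by `I`, pulling classes back along the maps `A/I → N`, `1 ↦ x`, gives a pairing of `N` with
`D(N)` valued in `E`. The induced map `D(N) → Hom(N, E)` is an isomorphism, by right exactness and
the case of `(A/I)^q` (`pairing_flip_injective`, `pairing_flip_surjective`); take `N = D(M)`.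
On the other side `M → Hom(D(M), E)` is injective, since `D` of a nonzero cyclic submodule is nonzero
(`pairing_injective`). Its target is isomorphic to `D(D(M))`, so it has the length of `M` and the
map is bijective; hence `M ≅ Hom(D(M), E) ≅ D(D(M))`.

The argument uses the `Ext` of the derived category; only its objectwise agreement with the
derived-functor `Ext` is needed (`nonempty_extA_equiv`), and no naturality of that comparison.
-/

open CategoryTheory

namespace GorensteinBidual

/-! ### Comparison of the two constructions of `Ext` -/

section Comparison

variable {A : Type} [CommRing A] {X Y : ModuleCat.{0} A} (P : ProjectiveResolution X)

/-- Vanishing of the class of a cocycle, uniformly in the degree: for `n = 0` the predecessor is the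
junk value `0`, and the differential from `0` to it is zero. -/
lemma extMk_eq_zero_iff_prev (n : ℕ) (f : P.complex.X n ⟶ Y)
    (hf : P.complex.d (n + 1) n ≫ f = 0) :
    P.extMk f (n + 1) rfl hf = 0 ↔
      ∃ g : P.complex.X ((ComplexShape.up ℕ).prev n) ⟶ Y,
        P.complex.d n ((ComplexShape.up ℕ).prev n) ≫ g = f := by
  cases n with
  | succ p =>
    have h : (ComplexShape.up ℕ).prev (p + 1) = p := by simp
    rw [h]
    exact P.extMk_eq_zero_iff f _ rfl hf p rfl
  | zero =>
    have h : P.complex.d 0 ((ComplexShape.up ℕ).prev 0) = 0 :=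
      P.complex.shape _ _ (by simp)
    simp only [h, Limits.zero_comp, exists_const]
    constructor
    · intro h0
      rw [← P.extEquivCohomologyClass.apply_eq_iff_eq,
        P.extEquivCohomologyClass_extMk, P.extEquivCohomologyClass_zero,
        CochainComplex.HomComplex.CohomologyClass.mk_eq_zero_iff,
        CochainComplex.HomComplex.Cocycle.toSingleMk_mem_coboundaries_iff _ _ _ _ _ 1 (by simp)] at h0
      obtain ⟨g, hg⟩ := h0
      have hz : Limits.IsZero (P.cochainComplex.X 1) :=
        P.cochainComplex.isZero_of_isStrictlyLE 0 1 (by simp)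
      rw [hz.eq_zero_of_src g, Limits.comp_zero] at hg
      rw [← cancel_epi (P.cochainComplexXIso (-(0 : ℕ)) 0 rfl).hom, ← hg]
      simp
    · rintro rfl
      simp

lemma smul_extMk (n : ℕ) (a : A) (f : P.complex.X n ⟶ Y)
    (hf : P.complex.d (n + 1) n ≫ f = 0) :
    a • P.extMk f (n + 1) rfl hf = P.extMk (a • f) (n + 1) rfl (by simp [hf]) := by
  rw [Abelian.Ext.smul_eq_comp_mk₀, P.extMk_comp_mk₀]
  simp

/-- The linear map sending a cocycle of `Hom(P, Y)` to the `Ext` class it represents. -/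
noncomputable def cocycleToExt (Y : ModuleCat.{0} A) (n : ℕ) :
    LinearMap.ker ((P.complex.linearYonedaObj A Y).sc' ((ComplexShape.up ℕ).prev n) n (n + 1)).g.hom
      →ₗ[A] Abelian.Ext X Y n where
  toFun f := P.extMk f.1 (n + 1) rfl f.2
  map_add' _ _ := (P.add_extMk _ _ _ _ _ _).symm
  map_smul' a f := (smul_extMk P n a f.1 f.2).symm

lemma cocycleToExt_surjective (n : ℕ) : Function.Surjective (cocycleToExt P Y n) := by
  intro α
  obtain ⟨f, hf, rfl⟩ := P.extMk_surjective α (n + 1) rfl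
  exact ⟨⟨f, hf⟩, rfl⟩

lemma ker_cocycleToExt (n : ℕ) :
    LinearMap.ker (cocycleToExt P Y n) = LinearMap.range
      ((P.complex.linearYonedaObj A Y).sc' ((ComplexShape.up ℕ).prev n) n (n + 1)).moduleCatToCycles := by
  ext f
  rw [LinearMap.mem_ker, LinearMap.mem_range]
  refine (extMk_eq_zero_iff_prev P n f.1 f.2).trans ⟨?_, ?_⟩
  · rintro ⟨g, hg⟩
    exact ⟨g, Subtype.ext hg⟩
  · rintro ⟨g, hg⟩
    exact ⟨g, congrArg Subtype.val hg⟩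

/-- The `Ext` modules defined by left derived functors agree with those defined through the derived
category. -/
lemma nonempty_extA_equiv (n : ℕ) (M N : Type)
    [AddCommGroup M] [Module A M] [AddCommGroup N] [Module A N] :
    Nonempty (extA A n M N ≃ₗ[A] Abelian.Ext (ModuleCat.of A M) (ModuleCat.of A N) n) := by
  let P := projectiveResolution (ModuleCat.of A M)
  let K := P.complex.linearYonedaObj A (ModuleCat.of A N)
  let S := K.sc' ((ComplexShape.up ℕ).prev n) n (n + 1)
  let e : extA A n M N ≅ S.moduleCatLeftHomologyData.H :=
    P.isoExt n (ModuleCat.of A N) ≪≫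
      ShortComplex.homologyMapIso (K.isoSc' _ n (n + 1) rfl (by simp)) ≪≫ S.moduleCatHomologyIso
  exact ⟨e.toLinearEquiv ≪≫ₗ
    Submodule.quotEquivOfEq _ _ (ker_cocycleToExt P n).symm ≪≫ₗ
    (cocycleToExt P (ModuleCat.of A N) n).quotKerEquivOfSurjective (cocycleToExt_surjective P n)⟩

end Comparison

/-! ### The duality functor on modules of finite length -/

section Duality

variable {A : Type} [CommRing A]

/-- The candidate dual `Ext_A^n(M, A)`, in the derived-category model of `Ext`, for which Mathlib
has composition products and the contravariant long exact sequence. -/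
abbrev D (A : Type) [CommRing A] (n : ℕ) (M : Type) [AddCommGroup M] [Module A M] : Type :=
  Abelian.Ext (ModuleCat.of A M) (ModuleCat.of A A) n

variable {M N Q : Type} [AddCommGroup M] [Module A M] [AddCommGroup N] [Module A N]
  [AddCommGroup Q] [Module A Q] {n : ℕ}

/-- Contravariant functoriality of `D` in the module. -/
noncomputable def pull (n : ℕ) (f : M →ₗ[A] N) : D A n N →ₗ[A] D A n M :=
  (Abelian.Ext.mk₀ (ModuleCat.ofHom f)).precompOfLinear A (ModuleCat.of A A) (zero_add n)

lemma pull_apply (f : M →ₗ[A] N) (x : D A n N) :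
    pull n f x = (Abelian.Ext.mk₀ (ModuleCat.ofHom f)).comp x (zero_add n) := rfl

lemma pull_id (x : D A n M) : pull n (LinearMap.id : M →ₗ[A] M) x = x :=
  Abelian.Ext.mk₀_id_comp x

lemma pull_comp (g : N →ₗ[A] Q) (f : M →ₗ[A] N) (x : D A n Q) :
    pull n (g ∘ₗ f) x = pull n f (pull n g x) := by
  simp only [pull_apply, ModuleCat.ofHom_comp, Abelian.Ext.mk₀_comp_mk₀_assoc]

/-- Isomorphic modules have isomorphic duals. -/
noncomputable def pullEquiv (n : ℕ) (e : M ≃ₗ[A] N) : D A n N ≃ₗ[A] D A n M :=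
  .ofLinearMap (pull n e.toLinearMap) (pull n e.symm.toLinearMap)
    (by ext x; simp [← pull_comp, pull_id]) (by ext x; simp [← pull_comp, pull_id])

lemma pull_add (f g : M →ₗ[A] N) (x : D A n N) :
    pull n (f + g) x = pull n f x + pull n g x := by
  simp only [pull_apply, ModuleCat.ofHom_add, Abelian.Ext.mk₀_add, Abelian.Ext.add_comp]

lemma pull_smul (a : A) (f : M →ₗ[A] N) (x : D A n N) :
    pull n (a • f) x = a • pull n f x := by
  have : ModuleCat.ofHom (a • f) = a • ModuleCat.ofHom f := rfl
  simp only [pull_apply, this, Abelian.Ext.mk₀_smul, Abelian.Ext.smul_comp]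

/-- `pull`, bundled as a linear map in the homomorphism along which one pulls back. -/
noncomputable def pullₗ (n : ℕ) (M N : Type) [AddCommGroup M] [Module A M] [AddCommGroup N]
    [Module A N] : (M →ₗ[A] N) →ₗ[A] D A n N →ₗ[A] D A n M where
  toFun := pull n
  map_add' f g := LinearMap.ext (pull_add f g)
  map_smul' a f := LinearMap.ext (pull_smul a f)

lemma shortExact_of {f : M →ₗ[A] N} {g : N →ₗ[A] Q} (hf : Function.Injective f)
    (hg : Function.Surjective g) (h : Function.Exact f g) :
    (ShortComplex.mk (ModuleCat.ofHom f) (ModuleCat.ofHom g)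
      (by rw [← ModuleCat.ofHom_comp, h.linearMap_comp_eq_zero]; rfl)).ShortExact where
  exact := (ShortComplex.ShortExact.moduleCat_exact_iff_function_exact _).2 h
  mono_f := (ModuleCat.mono_iff_injective _).2 hf
  epi_g := (ModuleCat.epi_iff_surjective _).2 hg

lemma pull_exact {f : M →ₗ[A] N} {g : N →ₗ[A] Q} (hf : Function.Injective f)
    (hg : Function.Surjective g) (h : Function.Exact f g) :
    Function.Exact (pull n g) (pull n f) := by
  intro x
  constructor
  · exact Abelian.Ext.contravariant_sequence_exact₂ (shortExact_of hf hg h) _ x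
  · rintro ⟨y, rfl⟩
    rw [← pull_comp, h.linearMap_comp_eq_zero]
    exact (congrArg (· y) (pullₗ n M Q).map_zero :)

/-- Injectivity uses the term `Ext^{n-1}(M, A)` of the long exact sequence; for `n = 0` it is left
exactness of `Hom`. -/
lemma pull_injective {f : M →ₗ[A] N} {g : N →ₗ[A] Q} (hf : Function.Injective f)
    (hg : Function.Surjective g) (h : Function.Exact f g)
    (hM : ∀ i, i ≠ n → Subsingleton (D A i M)) : Function.Injective (pull n g) := by
  cases n with
  | zero =>
    have : Epi (ModuleCat.ofHom g) := (ModuleCat.epi_iff_surjective _).2 hg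
    exact Abelian.Ext.precomp_mk₀_injective_of_epi _ (ModuleCat.ofHom g)
  | succ m =>
    rw [injective_iff_map_eq_zero]
    intro x hx
    obtain ⟨y, rfl⟩ := Abelian.Ext.contravariant_sequence_exact₃ (shortExact_of hf hg h) _ x hx
      (add_comm 1 m)
    have := hM m (by simp)
    rw [Subsingleton.elim y 0, Abelian.Ext.comp_zero]

lemma pull_surjective {f : M →ₗ[A] N} {g : N →ₗ[A] Q} (hf : Function.Injective f)
    (hg : Function.Surjective g) (h : Function.Exact f g)
    (hQ : ∀ i, i ≠ n → Subsingleton (D A i Q)) : Function.Surjective (pull n f) := by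
  intro x
  have := hQ (1 + n) (by simp)
  exact Abelian.Ext.contravariant_sequence_exact₁ (shortExact_of hf hg h) _ x rfl
    (Subsingleton.elim _ _)

/-- `M` has `Ext_A^i(M, A) = 0` for `i ≠ n` and its dual `Ext_A^n(M, A)` has the same length
(in `ℕ∞`) as `M`. -/
structure Dualizes (n : ℕ) (M : Type) [AddCommGroup M] [Module A M] : Prop where
  vanish : ∀ i, i ≠ n → Subsingleton (D A i M)
  length_eq : Module.length A (D A n M) = Module.length A M

lemma Dualizes.of_equiv (e : M ≃ₗ[A] N) (h : Dualizes (A := A) n M) : Dualizes (A := A) n N := by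
  refine ⟨fun i hi => ?_, ?_⟩
  · have := h.vanish i hi
    exact (pullEquiv i e).toEquiv.subsingleton
  · rw [(pullEquiv n e).length_eq, h.length_eq, e.length_eq]

lemma Dualizes.of_subsingleton [Subsingleton M] : Dualizes (A := A) n M := by
  have (i : ℕ) : Subsingleton (D A i M) := by
    refine subsingleton_of_forall_eq 0 fun x => ?_
    rw [← pull_id x, Subsingleton.elim (LinearMap.id : M →ₗ[A] M) 0]
    exact (congrArg (· x) (pullₗ i M M).map_zero :)
  exact ⟨fun i _ => this i, by rw [Module.length_eq_zero, Module.length_eq_zero]⟩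

lemma Dualizes.of_exact {f : M →ₗ[A] N} {g : N →ₗ[A] Q} (hf : Function.Injective f)
    (hg : Function.Surjective g) (h : Function.Exact f g)
    (hM : Dualizes (A := A) n M) (hQ : Dualizes (A := A) n Q) : Dualizes (A := A) n N := by
  refine ⟨fun i hi => ?_, ?_⟩
  · have := hM.vanish i hi
    have := hQ.vanish i hi
    refine subsingleton_of_forall_eq 0 fun x => ?_
    obtain ⟨y, rfl⟩ := (pull_exact hf hg h x).1 (Subsingleton.elim _ _)
    rw [Subsingleton.elim y 0, map_zero]
  · rw [Module.length_eq_add_of_exact (pull n g) (pull n f)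
        (pull_injective hf hg h hM.vanish) (pull_surjective hf hg h hQ.vanish)
        (pull_exact hf hg h), Module.length_eq_add_of_exact f g hf hg h,
      hM.length_eq, hQ.length_eq, add_comm]

/-- By dévissage, it suffices to know the duality properties for the residue field. -/
lemma Dualizes.of_isFiniteLength [IsLocalRing A]
    (hk : Dualizes (A := A) n (IsLocalRing.ResidueField A))
    (hM : IsFiniteLength A M) : Dualizes (A := A) n M := by
  induction hM with
  | of_subsingleton => exact .of_subsingleton
  | @of_simple_quotient M _ _ N _ _ ih =>
    refine .of_exact N.subtype_injective N.mkQ_surjective (LinearMap.exact_subtype_mkQ N) ih ?_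
    obtain ⟨I, hI, ⟨e⟩⟩ := isSimpleModule_iff_quot_maximal.1 ‹IsSimpleModule A (M ⧸ N)›
    obtain rfl := IsLocalRing.eq_maximalIdeal hI
    exact .of_equiv e.symm hk

/-! ### The pairing of a module with its dual -/

/-- The map `A/I → M`, `1 ↦ m`, attached to an element `m` of a module killed by `I`. -/
def orbit (I : Ideal A) (hI : I ≤ Module.annihilator A M) (m : M) : (A ⧸ I) →ₗ[A] M :=
  I.liftQ (LinearMap.toSpanSingleton A M m) fun a ha => by
    simpa using Module.mem_annihilator.1 (hI ha) m

@[simp] lemma orbit_mk (I : Ideal A) (hI : I ≤ Module.annihilator A M) (m : M) (a : A) :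
    orbit I hI m (Ideal.Quotient.mk I a) = a • m := rfl

lemma hom_ext {I : Ideal A} {f g : (A ⧸ I) →ₗ[A] M} (h : f 1 = g 1) : f = g := by
  ext
  exact h

@[simp] lemma orbit_one (I : Ideal A) (hI : I ≤ Module.annihilator A M) (m : M) :
    orbit I hI m 1 = m := by
  rw [← map_one (Ideal.Quotient.mk I), orbit_mk, one_smul]

lemma comp_orbit {I : Ideal A} (hI : I ≤ Module.annihilator A M) (hI' : I ≤ Module.annihilator A N)
    (f : M →ₗ[A] N) (m : M) : f ∘ₗ orbit I hI m = orbit I hI' (f m) :=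
  hom_ext (by simp)

/-- For a module `M` killed by `I`, the pairing `M → Hom(D(M), D(A/I))` sending `m` and `x` to the
pullback of `x` along `A/I → M`, `1 ↦ m`. Here `D(A/I)` plays the role of the dualizing module
of `A/I`. -/
noncomputable def pairing (n : ℕ) (I : Ideal A) (hI : I ≤ Module.annihilator A M) :
    M →ₗ[A] D A n M →ₗ[A] D A n (A ⧸ I) :=
  pullₗ n (A ⧸ I) M ∘ₗ
    { toFun := orbit I hI
      map_add' := fun x y => hom_ext (by simp)
      map_smul' := fun a x => hom_ext (by simp) }

lemma pairing_apply (I : Ideal A) (hI : I ≤ Module.annihilator A M) (m : M) (x : D A n M) :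
    pairing n I hI m x = pull n (orbit I hI m) x := rfl

/-- If `M` is generated by `s`, then `A / ann M` embeds in `M^s`. -/
lemma isFiniteLength_quotient_annihilator (hM : IsFiniteLength A M) :
    IsFiniteLength A (A ⧸ Module.annihilator A M) := by
  have := isFiniteLength_iff_isNoetherian_isArtinian.1 hM
  obtain ⟨_, _⟩ := this
  obtain ⟨s, hs⟩ := (Module.finite_def.1 (inferInstance : Module.Finite A M))
  let f : A →ₗ[A] (s → M) := LinearMap.pi fun m => LinearMap.toSpanSingleton A M m
  have hf : LinearMap.ker f = Module.annihilator A M := by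
    rw [← Submodule.annihilator_top, ← hs]
    ext a
    simp [f, Submodule.mem_annihilator_span, funext_iff]
  rw [← hf]
  exact (isFiniteLength_iff_isNoetherian_isArtinian.2 ⟨inferInstance, inferInstance⟩ :
    IsFiniteLength A (s → M)).of_injective (f := (LinearMap.ker f).liftQ f le_rfl)
    (LinearMap.ker_eq_bot.1 (Submodule.ker_liftQ_eq_bot' _ _ rfl))

lemma annihilator_le_annihilator_D : Module.annihilator A M ≤ Module.annihilator A (D A n M) := by
  intro a ha
  rw [Module.mem_annihilator] at ha ⊢
  intro x
  have h0 : a • (LinearMap.id : M →ₗ[A] M) = 0 := LinearMap.ext ha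
  rw [← pull_id x, ← pull_smul, h0]
  exact (congrArg (· x) (pullₗ n M M).map_zero :)


/-- The map `(A/I)^q → M` sending the standard basis to the family `v`. -/
noncomputable def genMap (I : Ideal A) (hI : I ≤ Module.annihilator A M) {q : ℕ} (v : Fin q → M) :
    (Fin q → A ⧸ I) →ₗ[A] M :=
  ∑ i, orbit I hI (v i) ∘ₗ LinearMap.proj i

lemma exists_pi_surjective (I : Ideal A) (hI : I ≤ Module.annihilator A M) [Module.Finite A M] :
    ∃ (q : ℕ) (v : Fin q → M), Function.Surjective
      (genMap I hI v) := by
  obtain ⟨q, v, hv⟩ := Module.Finite.exists_fin (R := A) (M := M)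
  refine ⟨q, v, fun m => ?_⟩
  obtain ⟨c, rfl⟩ := (Submodule.mem_span_range_iff_exists_fun A).1 (hv ▸ Submodule.mem_top : m ∈ _)
  exact ⟨fun i => Ideal.Quotient.mk I (c i), by simp [genMap]⟩

/-- Functoriality of `D` on direct sums: a class on `(A/I)^q` is determined by its restrictions
to the summands. -/
lemma sum_pull_single {I : Ideal A} {q : ℕ} (x : D A n (Fin q → A ⧸ I)) :
    x = ∑ i, pull n (LinearMap.proj i)
      (pull n (LinearMap.single A (fun _ : Fin q => A ⧸ I) i) x) := by
  have h : (LinearMap.id : (Fin q → A ⧸ I) →ₗ[A] _) =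
      ∑ i, LinearMap.single A (fun _ : Fin q => A ⧸ I) i ∘ₗ LinearMap.proj i := by
    ext
    simp
  conv_lhs => rw [← pull_id x, h]
  refine (congrArg (· x) (map_sum (pullₗ n (Fin q → A ⧸ I) _) _ _)).trans ?_
  rw [LinearMap.sum_apply]
  exact Finset.sum_congr rfl fun i _ => pull_comp ..

lemma bijective_of_length_eq {f : M →ₗ[A] N} (hf : Function.Injective f)
    (hN : IsFiniteLength A N) (h : Module.length A M = Module.length A N) :
    Function.Bijective f := by
  refine ⟨hf, ?_⟩
  have hadd := Module.length_eq_add_of_exact f (LinearMap.range f).mkQ hf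
    (LinearMap.range f).mkQ_surjective (LinearMap.exact_map_mkQ_range f)
  have hne := Module.length_ne_top_iff.2 hN
  rw [h] at hadd
  have h0 : Module.length A (N ⧸ LinearMap.range f) = 0 := by
    generalize Module.length A N = a at hadd hne
    generalize Module.length A (N ⧸ LinearMap.range f) = b at hadd
    exact ENat.add_right_injective_of_ne_top hne (hadd.symm.trans (add_zero a).symm)
  rw [Module.length_eq_zero_iff, Submodule.Quotient.subsingleton_iff] at h0
  exact LinearMap.range_eq_top.1 h0

variable [IsLocalRing A]

lemma Dualizes.pull_injective_of_surjective
    (hk : Dualizes (A := A) n (IsLocalRing.ResidueField A)) (hM : IsFiniteLength A M)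
    {g : M →ₗ[A] N} (hg : Function.Surjective g) : Function.Injective (pull n g) :=
  pull_injective (LinearMap.ker g).subtype_injective hg (LinearMap.exact_subtype_ker_map g)
    (hk.of_isFiniteLength (hM.of_injective (LinearMap.ker g).subtype_injective)).vanish

/-- The transposed pairing `D(M) → Hom(M, D(A/I))` is injective: a surjection `(A/I)^q → M` induces
an injection on `D`, and a class on `(A/I)^q` is determined by its restrictions to the summands. -/
lemma pairing_flip_injective (hk : Dualizes (A := A) n (IsLocalRing.ResidueField A))
    (I : Ideal A) (hB : IsFiniteLength A (A ⧸ I))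
    (hI : I ≤ Module.annihilator A M) (hM : IsFiniteLength A M) :
    Function.Injective (pairing n I hI).flip := by
  obtain ⟨_, _⟩ := isFiniteLength_iff_isNoetherian_isArtinian.1 hM
  obtain ⟨_, _⟩ := isFiniteLength_iff_isNoetherian_isArtinian.1 hB
  obtain ⟨q, v, hp⟩ := exists_pi_surjective I hI
  rw [injective_iff_map_eq_zero]
  intro x hx
  have hBq : IsFiniteLength A (Fin q → A ⧸ I) :=
    isFiniteLength_iff_isNoetherian_isArtinian.2 ⟨inferInstance, inferInstance⟩
  refine (injective_iff_map_eq_zero _).1 (hk.pull_injective_of_surjective hBq hp) x ?_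
  rw [sum_pull_single (pull n _ x)]
  refine Finset.sum_eq_zero fun i _ => ?_
  have hs : pull n (LinearMap.single A (fun _ : Fin q => A ⧸ I) i) (pull n (genMap I hI v) x) =
      0 := by
    -- restricted to a summand `A/I`, the map `genMap` becomes an orbit map
    rw [← pull_comp, show _ ∘ₗ LinearMap.single A (fun _ : Fin q => A ⧸ I) i = orbit I hI _ from
      hom_ext (orbit_one I hI _).symm]
    exact LinearMap.congr_fun hx _
  rw [hs, map_zero]

/-- The transposed pairing is surjective: the values of `f` at generators of `M` glue to a class `y`
on `(A/I)^q`. Since `f` is well defined on `M`, the class `y` dies on the kernel of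
`(A/I)^q → M`, so it comes from `M`. -/
lemma pairing_flip_surjective (hk : Dualizes (A := A) n (IsLocalRing.ResidueField A))
    (I : Ideal A) (hB : IsFiniteLength A (A ⧸ I))
    (hI : I ≤ Module.annihilator A M) (hM : IsFiniteLength A M) :
    Function.Surjective (pairing n I hI).flip := by
  obtain ⟨_, _⟩ := isFiniteLength_iff_isNoetherian_isArtinian.1 hM
  obtain ⟨_, _⟩ := isFiniteLength_iff_isNoetherian_isArtinian.1 hB
  obtain ⟨q, v, hp⟩ := exists_pi_surjective I hI
  set p := genMap I hI v with hpdef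
  have hBq : IsFiniteLength A (Fin q → A ⧸ I) :=
    isFiniteLength_iff_isNoetherian_isArtinian.2 ⟨inferInstance, inferInstance⟩
  have hIB : I ≤ Module.annihilator A (A ⧸ I) := by rw [Ideal.annihilator_quotient]
  have hIBq : I ≤ Module.annihilator A (Fin q → A ⧸ I) := fun a ha =>
    Module.mem_annihilator.2 fun y => funext fun i => Module.mem_annihilator.1 (hIB ha) (y i)
  have hIK : I ≤ Module.annihilator A (LinearMap.ker p) := fun a ha =>
    Module.mem_annihilator.2 fun y => Subtype.ext (Module.mem_annihilator.1 (hIBq ha) y)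
  intro f
  let y : D A n (Fin q → A ⧸ I) := ∑ i, pull n (LinearMap.proj i) (f (v i))
  have hy (z : Fin q → A ⧸ I) : pull n (orbit I hIBq z) y = f (p z) := by
    simp only [y, map_sum, hpdef, genMap, LinearMap.sum_apply, LinearMap.comp_apply, LinearMap.proj_apply]
    refine Finset.sum_congr rfl fun i _ => ?_
    obtain ⟨a, ha⟩ := Ideal.Quotient.mk_surjective (z i)
    rw [← ha, orbit_mk, map_smul, ← pull_comp, comp_orbit hIBq hIB]
    have : orbit I hIB (LinearMap.proj (R := A) (φ := fun _ : Fin q => A ⧸ I) i z) =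
        a • LinearMap.id := hom_ext (by
      rw [orbit_one, LinearMap.proj_apply, ← ha]
      exact (mul_one _).symm)
    rw [this, pull_smul, pull_id]
  -- Injectivity of the transposed pairing for the kernel reduces this to a pointwise check.
  have hyK : pull n (LinearMap.ker p).subtype y = 0 := by
    have hK := hBq.of_injective (LinearMap.ker p).subtype_injective
    refine pairing_flip_injective hk I hB hIK hK ?_
    ext k
    rw [map_zero, LinearMap.flip_apply, pairing_apply, ← pull_comp, comp_orbit hIK hIBq, hy]
    simp
  obtain ⟨x, hx⟩ := (pull_exact (LinearMap.ker p).subtype_injective hp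
    (LinearMap.exact_subtype_ker_map p) y).1 hyK
  refine ⟨x, ?_⟩
  ext m
  obtain ⟨z, rfl⟩ := hp m
  rw [LinearMap.flip_apply, pairing_apply, ← hy, ← hx, ← pull_comp, comp_orbit hIBq hI]

/-- If `m` pairs to zero with `D(M)`, then the dual of the cyclic module `A m` vanishes, because
`D(M) → D(A m)` is onto and `D(A m) → D(A/I)` is injective. By equality of lengths `A m = 0`. -/
lemma pairing_injective (hk : Dualizes (A := A) n (IsLocalRing.ResidueField A))
    (I : Ideal A) (hB : IsFiniteLength A (A ⧸ I))
    (hI : I ≤ Module.annihilator A M) (hM : IsFiniteLength A M) :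
    Function.Injective (pairing n I hI) := by
  rw [injective_iff_map_eq_zero]
  intro m hm
  let R := LinearMap.range (orbit I hI m)
  have hR : Dualizes (A := A) n R := hk.of_isFiniteLength (hM.of_injective R.subtype_injective)
  have hsurj : Function.Surjective (pull n R.subtype) :=
    pull_surjective R.subtype_injective R.mkQ_surjective (LinearMap.exact_subtype_mkQ R)
      (hk.of_isFiniteLength (hM.of_surjective R.mkQ_surjective)).vanish
  have hinj : Function.Injective (pull n (orbit I hI m).rangeRestrict) :=
    hk.pull_injective_of_surjective hB (orbit I hI m).surjective_rangeRestrict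
  have : Subsingleton (D A n R) := by
    refine subsingleton_of_forall_eq 0 fun x => ?_
    obtain ⟨x, rfl⟩ := hsurj x
    refine (injective_iff_map_eq_zero _).1 hinj _ ?_
    rw [← pull_comp, LinearMap.subtype_comp_codRestrict]
    exact (congrArg (· x) hm :)
  have : Subsingleton R := by
    rwa [← Module.length_eq_zero_iff (R := A), ← hR.length_eq, Module.length_eq_zero_iff]
  have h := Subsingleton.elim (⟨m, 1, orbit_one I hI m⟩ : R) 0
  exact congrArg Subtype.val h

/-- With `I = ann M`, both maps `D(D(M)) → Hom(D(M), D(A/I)) ← M` are isomorphisms. -/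
theorem nonempty_bidual_equiv (hk : Dualizes (A := A) n (IsLocalRing.ResidueField A))
    (hM : IsFiniteLength A M) : Nonempty (D A n (D A n M) ≃ₗ[A] M) := by
  let I := Module.annihilator A M
  have hB : IsFiniteLength A (A ⧸ I) := isFiniteLength_quotient_annihilator hM
  have hID : I ≤ Module.annihilator A (D A n M) := annihilator_le_annihilator_D
  have hMd := hk.of_isFiniteLength hM
  have hD : IsFiniteLength A (D A n M) := by
    rw [← Module.length_ne_top_iff, hMd.length_eq]
    exact Module.length_ne_top_iff.2 hM
  have hDd := hk.of_isFiniteLength hD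
  let e : D A n (D A n M) ≃ₗ[A] (D A n M →ₗ[A] D A n (A ⧸ I)) :=
    .ofBijective _ ⟨pairing_flip_injective hk I hB hID hD, pairing_flip_surjective hk I hB hID hD⟩
  have hlen : Module.length A M = Module.length A (D A n M →ₗ[A] D A n (A ⧸ I)) := by
    rw [← e.length_eq, hDd.length_eq, hMd.length_eq]
  have hfin : IsFiniteLength A (D A n M →ₗ[A] D A n (A ⧸ I)) := by
    rw [← Module.length_ne_top_iff, ← hlen]
    exact Module.length_ne_top_iff.2 hM
  exact ⟨e ≪≫ₗ (LinearEquiv.ofBijective (pairing n I le_rfl)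
    (bijective_of_length_eq (pairing_injective hk I hB le_rfl hM) hfin hlen)).symm⟩

end Duality

end GorensteinBidual

/-- If `(A, 𝔪)` is a commutative Noetherian local ring with residue field `k` which is
Gorenstein of dimension `n`, then for every finite-length `A`-module `M` the double dual
`Ext_A^n(Ext_A^n(M, A), A)` is isomorphic to `M` as an `A`-module. -/
theorem gorenstein_ext_bidual_of_finite_length
    (A : Type) [CommRing A] [IsNoetherianRing A] [IsLocalRing A] (n : ℕ)
    (hvanish : ∀ i : ℕ, i ≠ n → Subsingleton (extA A i (IsLocalRing.ResidueField A) A))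
    (hiso : Nonempty
      (extA A n (IsLocalRing.ResidueField A) A ≃ₗ[A] IsLocalRing.ResidueField A))
    (M : Type) [AddCommGroup M] [Module A M] (hM : IsFiniteLength A M) :
    Nonempty (extA A n (extA A n M A) A ≃ₗ[A] M) := by
  open GorensteinBidual in
  have hk : Dualizes (A := A) n (IsLocalRing.ResidueField A) := by
    refine ⟨fun i hi => ?_, ?_⟩
    · obtain ⟨e⟩ := nonempty_extA_equiv (A := A) i (IsLocalRing.ResidueField A) A
      have := hvanish i hi
      exact e.symm.toEquiv.subsingleton
    · obtain ⟨e⟩ := nonempty_extA_equiv (A := A) n (IsLocalRing.ResidueField A) A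
      obtain ⟨e'⟩ := hiso
      exact (e.symm ≪≫ₗ e').length_eq
  obtain ⟨e₁⟩ := nonempty_extA_equiv (A := A) n (extA A n M A) A
  obtain ⟨e₂⟩ := nonempty_extA_equiv (A := A) n M A
  obtain ⟨e₃⟩ := nonempty_bidual_equiv hk hM
  exact ⟨e₁ ≪≫ₗ pullEquiv n e₂.symm ≪≫ₗ e₃⟩
end

section
/- Let k be a field, n a natural number, and A = k[x₁, …, xₙ] the polynomial ring in n variables over k, with k regarded as an A-module via evaluation of polynomials at 0. Then Ext_A^i(k, A) = 0 for all i ≠ n, and Ext_A^n(k, A) is a one-dimensional k-vector space (isomorphic to k). -/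
/-!
The variables `x₁, …, xₙ` form a regular sequence on `A`, and `A / (x₁, …, xₙ) ≃ k`. Suppose that
`Ext^i(M, A)` is zero for `i ≠ j` and isomorphic to `M` for `i = j`, and that `x` is a
nonzerodivisor on `M`. The long exact sequence attached to `0 → M → M → M/xM → 0` then shows that `M/xM` has the
same property with `j` replaced by `j + 1` (`ExtConcentrated.quotSMulTop`). Starting with
`Ext^0(A, A) = Hom(A, A) ≃ A` and `Ext^i(A, A) = 0` for `i > 0`, and dividing by the variables one
at a time, one reaches `k` with `j = n`.

The long exact sequence is available for `CategoryTheory.Abelian.Ext`, defined through the derived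
category, whereas `extA` uses the left derived functors of `Hom(-, Y)`. Both are computed by a
projective resolution, which gives the `A`-linear comparison `extComparison`.
-/

open CategoryTheory

/-- `k` as a module over the polynomial ring `k[x₁, …, xₙ]`, via evaluation of polynomials
at `0`. -/
noncomputable instance evalZeroModule (k : Type) [CommRing k] (n : ℕ) :
    Module (MvPolynomial (Fin n) k) k :=
  Module.compHom k (MvPolynomial.eval (0 : Fin n → k))

/-- The homology of a short complex `S` of modules is any module onto which the cycles surject with
the boundaries as kernel. -/
lemma homEquivOfSurj {A : Type} [CommRing A] (S : ShortComplex (ModuleCat.{0} A))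
    {E : Type} [AddCommGroup E] [Module A E] (ψ : LinearMap.ker S.g.hom →ₗ[A] E)
    (hs : Function.Surjective ψ)
    (hk : ∀ x : LinearMap.ker S.g.hom, ψ x = 0 ↔ ∃ y, S.f y = x.1) :
    Nonempty (S.homology ≃ₗ[A] E) := by
  refine ⟨S.moduleCatHomologyIso.toLinearEquiv ≪≫ₗ
    (Submodule.quotEquivOfEq _ _ ?_) ≪≫ₗ ψ.quotKerEquivOfSurjective hs⟩
  ext x
  rw [LinearMap.mem_ker, hk]
  refine (exists_congr fun y => ?_ : (∃ y, S.moduleCatToCycles y = x) ↔ _)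
  exact Subtype.ext_iff

lemma smul_extMk {A : Type} [CommRing A] {X Y : ModuleCat.{0} A} (P : ProjectiveResolution X)
    {n : ℕ} (r : A) (f : P.complex.X n ⟶ Y) (m : ℕ) (hm : n + 1 = m)
    (hf : P.complex.d m n ≫ f = 0) :
    P.extMk (r • f) m hm (by simp [hf]) = r • P.extMk f m hm hf := by
  rw [Abelian.Ext.smul_eq_comp_mk₀, P.extMk_comp_mk₀]
  simp

/-- The degree `0` counterpart of `ProjectiveResolution.extMk_eq_zero_iff`: a `0`-cocycle is
a coboundary only if it vanishes. -/
lemma extMk_eq_zero_iff_zero {A : Type} [CommRing A] {X Y : ModuleCat.{0} A}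
    (P : ProjectiveResolution X)
    (f : P.complex.X 0 ⟶ Y) (m : ℕ) (hm : 0 + 1 = m)
    (hf : P.complex.d m 0 ≫ f = 0) : P.extMk f m hm hf = 0 ↔ f = 0 := by
  refine ⟨fun h => ?_, fun h => by subst h; simp⟩
  rw [← P.extEquivCohomologyClass.apply_eq_iff_eq,
    P.extEquivCohomologyClass_extMk, P.extEquivCohomologyClass_zero,
    CochainComplex.HomComplex.CohomologyClass.mk_eq_zero_iff,
    CochainComplex.HomComplex.Cocycle.toSingleMk_mem_coboundaries_iff _ _ _ _ _ 1 (by simp)] at h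
  obtain ⟨g, hg⟩ := h
  have : g = 0 := (P.cochainComplex.isZero_of_isStrictlyLE 0 1 (by simp)).eq_of_src _ _
  subst this
  rw [← cancel_epi (P.cochainComplexXIso (-0) 0 rfl).hom]
  simpa using hg.symm

/-- The left derived functors of `Hom(-, Y)` agree, `A`-linearly, with the `Ext` groups defined
through the derived category: both are the cohomology of `Hom(P, Y)` for a projective resolution
`P` of `X`. -/
lemma extComparison {A : Type} [CommRing A] (X Y : ModuleCat.{0} A) (n : ℕ) :
    Nonempty (((Ext A (ModuleCat A) n).obj (Opposite.op X)).obj Y ≃ₗ[A] Abelian.Ext X Y n) := by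
  let P := projectiveResolution X
  let K := P.complex.linearYonedaObj A Y
  have hnext : (ComplexShape.up ℕ).next n = n + 1 := by simp
  suffices h : Nonempty ((K.sc' ((ComplexShape.up ℕ).prev n) n (n + 1)).homology ≃ₗ[A]
      Abelian.Ext X Y n) by
    obtain ⟨e⟩ := h
    exact ⟨(P.isoExt n Y ≪≫ ShortComplex.homologyMapIso
      (K.isoSc' _ n (n + 1) rfl hnext)).toLinearEquiv ≪≫ₗ e⟩
  refine homEquivOfSurj _
    { toFun f := P.extMk (Y := Y) f.1 (n + 1) rfl f.2
      map_add' f g := (P.add_extMk _ _ _ _ _ _).symm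
      map_smul' r f := smul_extMk P r f.1 _ _ f.2 } ?_ ?_
  · intro α
    obtain ⟨f, hf, rfl⟩ := P.extMk_surjective α (n + 1) rfl
    exact ⟨⟨f, hf⟩, rfl⟩
  · intro f
    cases n with
    | zero =>
      refine (extMk_eq_zero_iff_zero P f.1 _ rfl f.2).trans ?_
      -- In degree `0` the incoming map of the complex is the differential `K.d 0 0`, which is zero.
      have hd : (K.sc' ((ComplexShape.up ℕ).prev 0) 0 (0 + 1)).f = 0 :=
        K.shape _ _ (by simp)
      rw [hd]
      exact ⟨fun h => ⟨0, h.symm⟩, fun ⟨_, h⟩ => h.symm⟩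
    | succ n =>
      refine (P.extMk_eq_zero_iff f.1 _ rfl f.2 n rfl).trans ?_
      rw [CochainComplex.prev_nat_succ]
      rfl

section

open Abelian Pointwise

/-- `Ext_A^i(M, Y)` vanishes for `i ≠ n` and is isomorphic to `M` itself for `i = n`; `Ext` is the
one defined through the derived category. -/
def ExtConcentrated {A : Type} [CommRing A] (M Y : ModuleCat.{0} A) (n : ℕ) : Prop :=
  (∀ i ≠ n, Subsingleton (Abelian.Ext M Y i)) ∧ Nonempty (Abelian.Ext M Y n ≃ₗ[A] M)

/-- In the long exact sequence of `0 → M → M → M/xM → 0` the endomorphism `x` of `Ext^i(M, Y)` is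
injective for every `i`, so only the cokernel of `x` on `Ext^n(M, Y) ≃ M` survives, and it is
`Ext^(n+1)(M/xM, Y)`. -/
lemma ExtConcentrated.quotSMulTop {A : Type} [CommRing A] {M Y : ModuleCat.{0} A} {n : ℕ}
    (h : ExtConcentrated M Y n) {x : A} (hx : IsSMulRegular M x) :
    ExtConcentrated (ModuleCat.of A (QuotSMulTop x M)) Y (n + 1) := by
  obtain ⟨h0, ⟨e⟩⟩ := h
  let f : M ⟶ M := x • 𝟙 M
  let g : M ⟶ ModuleCat.of A (QuotSMulTop x M) := (M.smulShortComplex x).g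
  have hfg : f ≫ g = 0 := (M.smulShortComplex x).zero
  have hS : (ShortComplex.mk f g hfg).ShortExact := hx.smulShortComplex_shortExact
  have hmul (i : ℕ) (z : Abelian.Ext M Y i) :
      (Ext.mk₀ f).comp z (zero_add i) = x • z := by
    rw [Ext.mk₀_smul, Ext.smul_comp, Ext.mk₀_id_comp]
  have hreg (i : ℕ) : IsSMulRegular (Abelian.Ext M Y i) x := by
    by_cases hi : i = n
    · subst hi
      exact (e.isSMulRegular_congr x).mpr hx
    · have := h0 i hi
      exact Function.injective_of_subsingleton _
  have hg (i : ℕ) (z : Abelian.Ext (ModuleCat.of A (QuotSMulTop x M)) Y i) :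
      (Ext.mk₀ g).comp z (zero_add i) = 0 := by
    apply hreg i
    change x • _ = x • _
    rw [← hmul, Ext.mk₀_comp_mk₀_assoc, hfg]
    simp
  constructor
  · intro i hi
    refine subsingleton_of_forall_eq 0 fun z => ?_
    cases i with
    | zero =>
      have : Epi g := hS.epi_g
      apply Ext.precomp_mk₀_injective_of_epi Y g
      exact (hg 0 z).trans (map_zero _).symm
    | succ j =>
      obtain ⟨w, hw⟩ := Ext.contravariant_sequence_exact₃ hS Y z (hg _ z) (add_comm 1 j)
      have := h0 j (by omega)
      have hw0 : w = 0 := Subsingleton.elim (α := Abelian.Ext M Y j) w 0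
      rw [← hw, hw0, Ext.comp_zero]
  · let δ : Abelian.Ext M Y n →ₗ[A] Abelian.Ext (ModuleCat.of A (QuotSMulTop x M)) Y (n + 1) :=
      hS.extClass.precompOfLinear A Y (add_comm 1 n)
    have hδ : Function.Surjective δ := fun z =>
      Ext.contravariant_sequence_exact₃ hS Y z (hg _ z) (add_comm 1 n)
    have hker : x • (⊤ : Submodule A (Abelian.Ext M Y n)) = LinearMap.ker δ := by
      ext z
      rw [Submodule.mem_smul_pointwise_iff_exists, LinearMap.mem_ker]
      constructor
      · rintro ⟨w, -, rfl⟩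
        rw [← hmul]
        exact hS.extClass_comp_assoc w (h := add_comm 1 n)
      · intro hz
        obtain ⟨w, hw⟩ := Ext.contravariant_sequence_exact₁ hS Y z (add_comm 1 n) hz
        exact ⟨w, trivial, (hmul n w).symm.trans hw⟩
    exact ⟨(δ.quotKerEquivOfSurjective hδ).symm ≪≫ₗ (Submodule.quotEquivOfEq _ _ hker).symm ≪≫ₗ
      QuotSMulTop.congr x e⟩

lemma ExtConcentrated.of_iso {A : Type} [CommRing A] {M M' Y : ModuleCat.{0} A} {n : ℕ}
    (h : ExtConcentrated M Y n) (e : M ≃ₗ[A] M') : ExtConcentrated M' Y n := by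
  have E (i : ℕ) : Nonempty (Abelian.Ext M' Y i ≃ₗ[A] Abelian.Ext M Y i) :=
    ⟨LinearEquiv.ofLinearMap ((Ext.mk₀ e.toModuleIso.hom).precompOfLinear A Y (zero_add i))
      ((Ext.mk₀ e.toModuleIso.inv).precompOfLinear A Y (zero_add i))
      (by ext z; simp [← ModuleCat.ofHom_comp])
      (by ext z; simp [← ModuleCat.ofHom_comp])⟩
  refine ⟨fun i hi => ?_, ?_⟩
  · have := h.1 i hi
    exact (E i).some.toEquiv.subsingleton
  · exact ⟨(E n).some ≪≫ₗ h.2.some ≪≫ₗ e⟩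

lemma ExtConcentrated.self (A : Type) [CommRing A] :
    ExtConcentrated (ModuleCat.of A A) (ModuleCat.of A A) 0 := by
  constructor
  · intro i hi
    obtain ⟨j, rfl⟩ := Nat.exists_eq_succ_of_ne_zero hi
    exact subsingleton_of_forall_eq 0 fun z => Ext.eq_zero_of_projective z
  · exact ⟨Ext.linearEquiv₀ (R := A) ≪≫ₗ ModuleCat.homLinearEquiv (S := A) ≪≫ₗ
      LinearMap.ringLmapEquivSelf A A A⟩

lemma ExtConcentrated.quotient {A : Type} [CommRing A] {Y : ModuleCat.{0} A} (rs : List A) :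
    ∀ (M : ModuleCat.{0} A) (n : ℕ), ExtConcentrated M Y n →
      RingTheory.Sequence.IsWeaklyRegular M rs →
      ExtConcentrated (ModuleCat.of A (M ⧸ (Ideal.ofList rs • ⊤ : Submodule A M))) Y
        (n + rs.length) := by
  induction rs with
  | nil =>
    intro M n h _
    exact h.of_iso (Submodule.quotEquivOfEqBot _ (by simp)).symm
  | cons r rs ih =>
    intro M n h hr
    rw [RingTheory.Sequence.isWeaklyRegular_cons_iff] at hr
    have := ih _ _ (h.quotSMulTop hr.1) hr.2
    rw [List.length_cons, add_comm rs.length, ← add_assoc]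
    exact this.of_iso (Submodule.quotOfListConsSMulTopEquivQuotSMulTopInner M r rs).symm

end

section

open MvPolynomial

/-- Membership in an ideal generated by variables is read off monomial by monomial, and multiplying
a monomial by `X j` with `j ∉ s` does not change its exponents along `s`. -/
lemma isSMulRegular_X_quotient (k σ : Type) [Field k] (s : Set σ) (j : σ) (hj : j ∉ s) :
    IsSMulRegular (MvPolynomial σ k ⧸ Ideal.span (X '' s : Set (MvPolynomial σ k)))
      (X j : MvPolynomial σ k) := by
  rw [isSMulRegular_iff_right_eq_zero_of_smul]
  intro q hq
  obtain ⟨p, rfl⟩ := Ideal.Quotient.mk_surjective q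
  rw [← Ideal.Quotient.mk_eq_mk, ← Submodule.Quotient.mk_smul, Submodule.Quotient.mk_eq_zero,
    mem_ideal_span_X_image] at hq
  rw [Ideal.Quotient.eq_zero_iff_mem, mem_ideal_span_X_image]
  intro m hm
  obtain ⟨i, hi, h⟩ := hq (m + Finsupp.single j 1) (by
    rw [mem_support_iff] at hm ⊢
    rwa [smul_eq_mul, mul_comm, coeff_mul_X])
  refine ⟨i, hi, ?_⟩
  have : j ≠ i := fun h => hj (h ▸ hi)
  simpa [Finsupp.single_apply, this] using h

lemma ofList_take_X (k : Type) [Field k] (n i : ℕ) :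
    Ideal.ofList (((List.finRange n).map (X : Fin n → MvPolynomial (Fin n) k)).take i) =
      Ideal.span (X '' {j : Fin n | (j : ℕ) < i}) := by
  rw [Ideal.ofList, ← List.map_take]
  congr 1
  ext p
  simp only [List.mem_map, Set.mem_ofPred_eq, Set.mem_image, List.mem_take_iff_getElem]
  refine exists_congr fun j => and_congr_left fun _ => ?_
  constructor
  · rintro ⟨a, ha, rfl⟩
    simp at ha ⊢
    omega
  · intro h
    exact ⟨j, by simp [h], by simp⟩

lemma isWeaklyRegular_X (k : Type) [Field k] (n : ℕ) :
    RingTheory.Sequence.IsWeaklyRegular (MvPolynomial (Fin n) k)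
      ((List.finRange n).map (X : Fin n → MvPolynomial (Fin n) k)) := by
  constructor
  intro i hi
  rw [ofList_take_X, smul_eq_mul, Ideal.mul_top, List.getElem_map, List.getElem_finRange]
  exact isSMulRegular_X_quotient _ _ _ _ (by simp)

lemma quotientEquiv (k : Type) [Field k] (n : ℕ) :
    Nonempty ((MvPolynomial (Fin n) k ⧸
      (Ideal.ofList ((List.finRange n).map (X : Fin n → MvPolynomial (Fin n) k)) • ⊤ :
        Ideal (MvPolynomial (Fin n) k))) ≃ₗ[MvPolynomial (Fin n) k] k) := by
  let φ : MvPolynomial (Fin n) k →ₗ[MvPolynomial (Fin n) k] k :=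
    LinearMap.toSpanSingleton _ _ 1
  have hφ (p) : φ p = constantCoeff p := by
    change eval 0 p * 1 = _
    rw [mul_one]
    simp
  refine ⟨Submodule.quotEquivOfEq _ _ ?_ ≪≫ₗ
    φ.quotKerEquivOfSurjective fun a => ⟨C a, by simp [hφ]⟩⟩
  have h := ofList_take_X k n n
  rw [List.take_of_length_le (by simp)] at h
  rw [smul_eq_mul, Ideal.mul_top, h]
  ext p
  rw [mem_ideal_span_X_image, LinearMap.mem_ker, hφ, constantCoeff_eq]
  constructor
  · intro H
    by_contra h0
    obtain ⟨i, -, hi⟩ := H 0 (mem_support_iff.mpr h0)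
    exact hi rfl
  · intro h0 m hm
    by_contra! H
    refine mem_support_iff.mp hm ?_
    rwa [show m = 0 from Finsupp.ext fun i => H i (by simp)]

end

/-- For a field `k` and `A = k[x₁, …, xₙ]`, with `k` an `A`-module via evaluation at `0`,
one has `Ext_A^i(k, A) = 0` for `i ≠ n`, and `Ext_A^n(k, A)` is a one-dimensional
`k`-vector space, i.e. isomorphic to `k`. -/
theorem mvPolynomial_over_field_gorenstein (k : Type) [Field k] (n : ℕ) :
    (∀ i : ℕ, i ≠ n →
        Subsingleton (extA (MvPolynomial (Fin n) k) i k (MvPolynomial (Fin n) k))) ∧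
      Nonempty (extA (MvPolynomial (Fin n) k) n k (MvPolynomial (Fin n) k)
        ≃ₗ[MvPolynomial (Fin n) k] k) := by
  obtain ⟨e⟩ := quotientEquiv k n
  have h := ((ExtConcentrated.self (MvPolynomial (Fin n) k)).quotient _ _ _
    (isWeaklyRegular_X k n)).of_iso (M' := ModuleCat.of _ k) e
  rw [List.length_map, List.length_finRange, zero_add] at h
  refine ⟨fun i hi => ?_, ?_⟩
  · obtain ⟨c⟩ := extComparison (ModuleCat.of (MvPolynomial (Fin n) k) k)
      (ModuleCat.of _ (MvPolynomial (Fin n) k)) i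
    have := h.1 i hi
    exact c.toEquiv.subsingleton
  · obtain ⟨c⟩ := extComparison (ModuleCat.of (MvPolynomial (Fin n) k) k)
      (ModuleCat.of _ (MvPolynomial (Fin n) k)) n
    obtain ⟨d⟩ := h.2
    exact ⟨c ≪≫ₗ d⟩
end
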